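/- Let F : (ℤ → ℚ) → (ℤ → ℚ) be the cellular automaton global map induced by the local function f(u,v) = (1/2)·u·v·(3·u·v − 5·u − 5·v + 9) (the rule of semigroup G₁₄). Suppose x : ℤ → ℚ satisfies x(i) ∈ {0,1,2} for all i ∈ ℤ. Then for every n ∈ ℕ and every i ∈ ℤ, [F^[n] x] i = ∏_{j=0}^{n} x(i+j)·(2 − x(i+j)) + 2·∏_{j=0}^{n} (1/2)·x(i+j)·(x(i+j) − 1). -/

import Mathlib

/-!
On `{0, 1, 2}` the rule is the semigroup operation `u * u = u`, `u * v = 0` for `u ≠ v`. The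
indicator functions of `1` and `2` are multiplicative for it with values in `{0, 1}`, so each
turns the automaton into the rule `(a, b) ↦ a * b` on idempotents, whose `n`-th iterate is the
product over a window of `n + 1` cells. A state is recovered from its two indicators as
`1 * (indicator of 1) + 2 * (indicator of 2)`.
-/

section GlobalMap

open Finset

variable {A G M : Type*} [AddMonoidWithOne G] [CommMonoid M]

/-- The global map of the cellular automaton with local rule `f`, in which the right neighbour of
the cell `i` is `i + 1`. Any `G` with addition and a `1` can index the cells: besides `ℤ`, this
allows one-sided configurations (`ℕ`) and periodic ones (`ZMod m`). -/
def globalMap (f : A → A → A) (x : G → A) (i : G) : A :=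
  f (x i) (x (i + 1))

theorem prod_range_mul_succ_of_isIdempotentElem {a : ℕ → M} (ha : ∀ j, IsIdempotentElem (a j))
    (n : ℕ) : ∏ j ∈ range (n + 1), a j * a (j + 1) = ∏ j ∈ range (n + 2), a j := by
  induction n with
  | zero => simp [prod_range_succ]
  | succ n ih =>
    calc ∏ j ∈ range (n + 2), a j * a (j + 1)
        = (∏ j ∈ range (n + 1), a j) * (a (n + 1) * a (n + 1)) * a (n + 2) := by
          rw [prod_range_succ, ih, prod_range_succ]
          simp only [mul_assoc]
      _ = ∏ j ∈ range (n + 3), a j := by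
          rw [(ha (n + 1)).eq, ← prod_range_succ, ← prod_range_succ]

theorem map_iterate_globalMap {f : A → A → A} {S : Set A} {χ : A → M}
    (hfS : ∀ u ∈ S, ∀ v ∈ S, f u v ∈ S)
    (hχ_mul : ∀ u ∈ S, ∀ v ∈ S, χ (f u v) = χ u * χ v)
    (hχ_idem : ∀ u ∈ S, IsIdempotentElem (χ u))
    {x : G → A} (hx : ∀ i, x i ∈ S) (n : ℕ) (i : G) :
    χ ((globalMap f)^[n] x i) = ∏ j ∈ range (n + 1), χ (x (i + j)) := by
  induction n generalizing x with
  | zero => simp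
  | succ n ih =>
    have hFx : ∀ k, globalMap f x k ∈ S := fun k => hfS _ (hx k) _ (hx (k + 1))
    calc χ ((globalMap f)^[n + 1] x i)
        = ∏ j ∈ range (n + 1), χ (globalMap f x (i + j)) := by
          rw [Function.iterate_succ_apply, ih hFx]
      _ = ∏ j ∈ range (n + 1), χ (x (i + j)) * χ (x (i + (j + 1 : ℕ))) := by
          refine prod_congr rfl fun j _ => ?_
          rw [globalMap, hχ_mul _ (hx _) _ (hx _), Nat.cast_succ, add_assoc]
      _ = ∏ j ∈ range (n + 2), χ (x (i + j)) :=
          prod_range_mul_succ_of_isIdempotentElem (fun j => hχ_idem _ (hx (i + j))) n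

end GlobalMap

section RuleG14

variable {K : Type*} [Field K]

/-- The local rule of the semigroup G₁₄, as a polynomial over a field containing its states
`0`, `1`, `2`. -/
def ruleG14 (u v : K) : K :=
  (1 / 2) * u * v * (3 * u * v - 5 * u - 5 * v + 9)

/-- The polynomial that is the indicator function of the state `1` on `{0, 1, 2}`. -/
def indicatorOne (u : K) : K :=
  u * (2 - u)

/-- The polynomial that is the indicator function of the state `2` on `{0, 1, 2}`. -/
def indicatorTwo (u : K) : K :=
  (1 / 2) * u * (u - 1)

variable {u v : K}

theorem ruleG14_of_ne (hu : u ∈ ({0, 1, 2} : Set K)) (hv : v ∈ ({0, 1, 2} : Set K))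
    (huv : u ≠ v) : ruleG14 u v = 0 := by
  rcases hu with rfl | rfl | rfl <;> rcases hv with rfl | rfl | rfl <;>
    first | exact absurd rfl huv | (simp only [ruleG14]; ring)

theorem isIdempotentElem_indicatorOne (hu : u ∈ ({0, 1, 2} : Set K)) :
    IsIdempotentElem (indicatorOne u) := by
  rcases hu with rfl | rfl | rfl <;> simp only [IsIdempotentElem, indicatorOne] <;> ring

variable [NeZero (2 : K)]

theorem indicatorTwo_two : indicatorTwo (2 : K) = 1 := by
  have h2 : (2 : K) ≠ 0 := two_ne_zero
  simp only [indicatorTwo]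
  field_simp
  ring

theorem isIdempotentElem_indicatorTwo (hu : u ∈ ({0, 1, 2} : Set K)) :
    IsIdempotentElem (indicatorTwo u) := by
  rcases hu with rfl | rfl | rfl
  · simp [IsIdempotentElem, indicatorTwo]
  · simp [IsIdempotentElem, indicatorTwo]
  · rw [indicatorTwo_two]
    exact .one

theorem indicatorOne_add_two_mul_indicatorTwo (u : K) :
    indicatorOne u + 2 * indicatorTwo u = u := by
  have h2 : (2 : K) ≠ 0 := two_ne_zero
  simp only [indicatorOne, indicatorTwo]
  field_simp
  ring

theorem ruleG14_self (hu : u ∈ ({0, 1, 2} : Set K)) : ruleG14 u u = u := by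
  have h2 : (2 : K) ≠ 0 := two_ne_zero
  rcases hu with rfl | rfl | rfl <;> simp only [ruleG14] <;> field_simp <;> ring

theorem ruleG14_mem (hu : u ∈ ({0, 1, 2} : Set K)) (hv : v ∈ ({0, 1, 2} : Set K)) :
    ruleG14 u v ∈ ({0, 1, 2} : Set K) := by
  by_cases huv : u = v
  · rwa [← huv, ruleG14_self hu]
  · exact Or.inl (ruleG14_of_ne hu hv huv)

variable {M : Type*} [CommMonoidWithZero M] {χ : K → M}

theorem map_ruleG14 (hχ_zero : χ 0 = 0) (hχ_one_two : χ 1 * χ 2 = 0)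
    (hχ_idem : ∀ u ∈ ({0, 1, 2} : Set K), IsIdempotentElem (χ u))
    (hu : u ∈ ({0, 1, 2} : Set K)) (hv : v ∈ ({0, 1, 2} : Set K)) :
    χ (ruleG14 u v) = χ u * χ v := by
  by_cases huv : u = v
  · rw [← huv, ruleG14_self hu, (hχ_idem u hu).eq]
  · rw [ruleG14_of_ne hu hv huv, hχ_zero]
    rcases hu with rfl | rfl | rfl <;> rcases hv with rfl | rfl | rfl <;>
      first | exact absurd rfl huv | simp [hχ_zero, hχ_one_two, mul_comm (χ 2)]

theorem map_iterate_globalMap_ruleG14 {G : Type*} [AddMonoidWithOne G]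
    (hχ_zero : χ 0 = 0) (hχ_one_two : χ 1 * χ 2 = 0)
    (hχ_idem : ∀ u ∈ ({0, 1, 2} : Set K), IsIdempotentElem (χ u))
    {x : G → K} (hx : ∀ i, x i ∈ ({0, 1, 2} : Set K)) (n : ℕ) (i : G) :
    χ ((globalMap ruleG14)^[n] x i) = ∏ j ∈ Finset.range (n + 1), χ (x (i + j)) :=
  map_iterate_globalMap (fun _ hu _ hv => ruleG14_mem hu hv)
    (fun _ hu _ hv => map_ruleG14 hχ_zero hχ_one_two hχ_idem hu hv) hχ_idem hx n i

end RuleG14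

theorem stmt_14_general {K G : Type*} [Field K] [NeZero (2 : K)] [AddMonoidWithOne G]
    (F : (G → K) → (G → K))
    (hF : ∀ x : G → K, ∀ i : G,
      F x i = (1 / 2) * x i * x (i + 1) *
        (3 * x i * x (i + 1) - 5 * x i - 5 * x (i + 1) + 9))
    (x : G → K) (hx : ∀ i : G, x i ∈ ({0, 1, 2} : Set K)) (n : ℕ) (i : G) :
    F^[n] x i = (∏ j ∈ Finset.range (n + 1), x (i + j) * (2 - x (i + j)))
      + 2 * ∏ j ∈ Finset.range (n + 1), (1 / 2) * x (i + j) * (x (i + j) - 1) := by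
  obtain rfl : F = globalMap ruleG14 := funext₂ hF
  have h_one : indicatorOne ((globalMap ruleG14)^[n] x i) =
      ∏ j ∈ Finset.range (n + 1), indicatorOne (x (i + j)) :=
    map_iterate_globalMap_ruleG14 (by simp [indicatorOne]) (by simp [indicatorOne])
      (fun _ => isIdempotentElem_indicatorOne) hx n i
  have h_two : indicatorTwo ((globalMap ruleG14)^[n] x i) =
      ∏ j ∈ Finset.range (n + 1), indicatorTwo (x (i + j)) :=
    map_iterate_globalMap_ruleG14 (by simp [indicatorTwo]) (by simp [indicatorTwo])
      (fun _ => isIdempotentElem_indicatorTwo) hx n i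
  rw [← indicatorOne_add_two_mul_indicatorTwo ((globalMap ruleG14)^[n] x i), h_one, h_two]
  rfl

/-- Rule G₁₄. -/
theorem stmt_14 (F : (ℤ → ℚ) → (ℤ → ℚ))
    (hF : ∀ x : ℤ → ℚ, ∀ i : ℤ,
      F x i = (1 / 2) * x i * x (i + 1) *
        (3 * x i * x (i + 1) - 5 * x i - 5 * x (i + 1) + 9))
    (x : ℤ → ℚ) (hx : ∀ i : ℤ, x i ∈ ({0, 1, 2} : Set ℚ)) :
    ∀ (n : ℕ) (i : ℤ),
      F^[n] x i = (∏ j ∈ Finset.range (n + 1), x (i + j) * (2 - x (i + j)))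
        + 2 * ∏ j ∈ Finset.range (n + 1), (1 / 2) * x (i + j) * (x (i + j) - 1) :=
  stmt_14_general F hF x hx
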